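/- Every linear isomorphism T : V → V of a finite-dimensional real vector space has vanishing topological entropy: h(T) = 0, where h denotes the topological entropy defined via admissible coverings (equivalently, sup of measure entropies over T-invariant Borel probabilities on V). -/

import Mathlib

open Set Filter Topology

/-- A map is proper if it is continuous and preimages of compact sets are compact. -/
def IsProper {X Y : Type*} [TopologicalSpace X] [TopologicalSpace Y] (f : X → Y) : Prop :=
  Continuous f ∧ ∀ K : Set Y, IsCompact K → IsCompact (f ⁻¹' K)

/-- An admissible covering: open, finite, covers, and each element has compact
closure or compact complement. -/
def IsAdmissibleCover {X : Type*} [TopologicalSpace X] (α : Set (Set X)) : Prop :=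
  α.Finite ∧ (∀ A ∈ α, IsOpen A) ∧ ⋃₀ α = univ ∧
    ∀ A ∈ α, IsCompact (closure A) ∨ IsCompact Aᶜ

/-- `coverIter T α n` is the collection of sets `A₀ ∩ T⁻¹ A₁ ∩ ⋯ ∩ T⁻⁽ⁿ⁻¹⁾ A_{n-1}`
with all `Aᵢ ∈ α`; the paper's `αⁿ` is `coverIter T α (n+1)`. -/
def coverIter {X : Type*} (T : X → X) (α : Set (Set X)) (n : ℕ) : Set (Set X) :=
  {B | ∃ A : Fin n → Set X, (∀ i, A i ∈ α) ∧ B = ⋂ i : Fin n, T^[i.val] ⁻¹' A i}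

/-- `coverNum β` is the minimal cardinality of a (finite) subcover of `β`. -/
noncomputable def coverNum {X : Type*} (β : Set (Set X)) : ℕ :=
  sInf {k | ∃ γ ⊆ β, γ.Finite ∧ ⋃₀ γ = univ ∧ γ.ncard = k}

/-- `h(T, α) = lim (1/n) log N(αⁿ)` (as a limsup, valued in `EReal`). -/
noncomputable def coverEntropyOf {X : Type*} (T : X → X) (α : Set (Set X)) : EReal :=
  Filter.limsup (fun n : ℕ => ((Real.log (coverNum (coverIter T α n)) / n : ℝ) : EReal)) Filter.atTop

/-- The topological entropy `h(T)`, the supremum of `h(T, α)` over admissible coverings. -/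
noncomputable def topEntropy {X : Type*} [TopologicalSpace X] (T : X → X) : EReal :=
  ⨆ (α : Set (Set X)) (_ : IsAdmissibleCover α), coverEntropyOf T α


/-- Number of sign patterns of finitely many affine functions (Sauer-Shelah). -/
theorem card_patterns_le {V : Type*} [NormedAddCommGroup V] [NormedSpace ℝ V]
    [FiniteDimensional ℝ V] {J : Type*} [Fintype J] [DecidableEq J]
    (f : J → (V →ₗ[ℝ] ℝ) × ℝ) (𝒜 : Finset (Finset J))
    (h𝒜 : ∀ s ∈ 𝒜, ∃ x : V, ∀ j, j ∈ s ↔ 0 ≤ (f j).1 x + (f j).2) :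
    𝒜.card ≤ (Module.finrank ℝ ((V →ₗ[ℝ] ℝ) × ℝ) + 1) *
      (Fintype.card J + 1) ^ (Module.finrank ℝ ((V →ₗ[ℝ] ℝ) × ℝ)) := by
  classical
  set D := Module.finrank ℝ ((V →ₗ[ℝ] ℝ) × ℝ) with hD
  have hvc : 𝒜.vcDim ≤ D := by
    refine Finset.sup_le fun s hs => ?_
    rw [Finset.mem_shatterer] at hs
    by_contra hcard
    have hdep : ¬ LinearIndependent ℝ (fun j : s => f j) := by
      intro hli
      have := hli.fintype_card_le_finrank
      rw [Fintype.card_coe] at this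
      exact hcard this
    have key : ∀ g : s → ℝ, ∑ j, g j • f j = 0 → ∀ j, 0 ≤ g j := by
      intro g hg j
      by_contra hj
      push Not at hj
      obtain ⟨u, hu, hsu⟩ := hs (t := s.filter (fun i => ∃ h : i ∈ s, 0 ≤ g ⟨i, h⟩))
        (Finset.filter_subset _ _)
      obtain ⟨x, hx⟩ := h𝒜 u hu
      have hmem : ∀ i : s, 0 ≤ g i ↔ 0 ≤ (f i).1 x + (f i).2 := by
        intro i
        rw [← hx]
        have := Finset.ext_iff.1 hsu i
        simp at this
        exact this.symm
      have h1 : ∑ i, g i * ((f i).1 x + (f i).2) = 0 := by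
        have h2 := congrArg (fun p : (V →ₗ[ℝ] ℝ) × ℝ => p.1 x + p.2) hg
        simp only [Prod.fst_sum, Prod.snd_sum, LinearMap.sum_apply, Prod.smul_fst, Prod.smul_snd,
          LinearMap.smul_apply, smul_eq_mul, ← Finset.sum_add_distrib, ← mul_add] at h2
        simpa using h2
      have h3 : 0 < ∑ i, g i * ((f i).1 x + (f i).2) := by
        refine Finset.sum_pos' (fun i _ => ?_) ⟨j, Finset.mem_univ _, ?_⟩
        · rcases le_or_gt 0 (g i) with h | h
          · exact mul_nonneg h ((hmem i).1 h)
          · have : ¬ 0 ≤ (f i).1 x + (f i).2 := fun h' => absurd ((hmem i).2 h') (not_le.2 h)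
            push Not at this
            exact (mul_pos_of_neg_of_neg h this).le
        · have : ¬ 0 ≤ (f j).1 x + (f j).2 := fun h' => absurd ((hmem j).2 h') (not_le.2 hj)
          push Not at this
          exact mul_pos_of_neg_of_neg hj this
      linarith
    apply hdep
    rw [Fintype.linearIndependent_iff]
    intro g hg j
    have h1 := key g hg j
    have h2 := key (fun j => - g j) (by
      have h3 : ∑ i, (-1 : ℝ) • (g i • f i) = 0 := by rw [← Finset.smul_sum, hg, smul_zero]
      rw [← h3]
      refine Finset.sum_congr rfl fun i _ => ?_
      rw [smul_smul, neg_one_mul]) j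
    simp at h2
    linarith
  calc 𝒜.card ≤ 𝒜.shatterer.card := Finset.card_le_card_shatterer 𝒜
    _ ≤ ∑ k ∈ Finset.Iic 𝒜.vcDim, (Fintype.card J).choose k := Finset.card_shatterer_le_sum_vcDim
    _ ≤ ∑ k ∈ Finset.Iic D, (Fintype.card J).choose k :=
        Finset.sum_le_sum_of_subset (Finset.Iic_subset_Iic.2 hvc)
    _ ≤ ∑ k ∈ Finset.Iic D, (Fintype.card J + 1) ^ D := by
        refine Finset.sum_le_sum fun k hk => ?_
        rw [Finset.mem_Iic] at hk
        calc (Fintype.card J).choose k ≤ (Fintype.card J) ^ k := Nat.choose_le_pow _ _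
          _ ≤ (Fintype.card J + 1) ^ k := Nat.pow_le_pow_left (Nat.le_succ _) _
          _ ≤ _ := Nat.pow_le_pow_right (Nat.succ_pos _) hk
    _ = _ := by simp

/-- Every point has, inside a given neighborhood, a box neighborhood cut out by finitely many
affine functions. -/
theorem exists_box {V : Type*} [NormedAddCommGroup V] [NormedSpace ℝ V]
    [FiniteDimensional ℝ V] (p : V) (A : Set V) (hA : A ∈ 𝓝 p) :
    ∃ F : Set ((V →ₗ[ℝ] ℝ) × ℝ), F.Finite ∧ {x : V | ∀ f ∈ F, 0 ≤ f.1 x + f.2} ⊆ A ∧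
      {x : V | ∀ f ∈ F, 0 ≤ f.1 x + f.2} ∈ 𝓝 p := by
  let e : V ≃L[ℝ] (Fin (Module.finrank ℝ V) → ℝ) :=
    ContinuousLinearEquiv.ofFinrankEq (by simp)
  have h1 : e.symm ⁻¹' A ∈ 𝓝 (e p) :=
    e.symm.continuous.continuousAt.preimage_mem_nhds (by simpa using hA)
  obtain ⟨ε, hε, hb⟩ := Metric.nhds_basis_closedBall.mem_iff.1 h1
  let φ : Fin (Module.finrank ℝ V) → (V →ₗ[ℝ] ℝ) := fun j =>
    (LinearMap.proj j).comp (e : V →ₗ[ℝ] (Fin (Module.finrank ℝ V) → ℝ))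
  have hφ : ∀ j x, φ j x = e x j := fun j x => rfl
  let F : Set ((V →ₗ[ℝ] ℝ) × ℝ) := Set.range (fun j => (φ j, ε - e p j)) ∪
    Set.range (fun j => (- φ j, ε + e p j))
  have hF : {x : V | ∀ f ∈ F, 0 ≤ f.1 x + f.2} = e ⁻¹' Metric.closedBall (e p) ε := by
    ext x
    simp only [Set.mem_setOf_eq, Set.mem_preimage, Metric.mem_closedBall,
      dist_pi_le_iff hε.le, Real.dist_eq, abs_le]
    constructor
    · intro h j
      have h1 := h _ (Or.inl ⟨j, rfl⟩)
      have h2 := h _ (Or.inr ⟨j, rfl⟩)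
      simp only [hφ, LinearMap.neg_apply] at h1 h2
      constructor <;> linarith
    · rintro h f (⟨j, rfl⟩ | ⟨j, rfl⟩)
      · have := h j
        simp only [hφ]
        linarith
      · have := h j
        simp only [hφ, LinearMap.neg_apply]
        linarith
  refine ⟨F, (Set.finite_range _).union (Set.finite_range _), ?_, ?_⟩
  · rw [hF]
    intro x hx
    have := hb hx
    simpa using this
  · rw [hF]
    exact e.continuous.continuousAt.preimage_mem_nhds (Metric.closedBall_mem_nhds _ hε)

/-- A finite family of affine functions all of whose sign cells are finer than the cover. -/
theorem exists_cells {V : Type*} [NormedAddCommGroup V] [NormedSpace ℝ V]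
    [FiniteDimensional ℝ V] (α : Set (Set V)) (hα : IsAdmissibleCover α) :
    ∃ F : Set ((V →ₗ[ℝ] ℝ) × ℝ), F.Finite ∧ ∀ x : V, ∃ A ∈ α, ∀ y : V,
      (∀ f ∈ F, 0 ≤ f.1 x + f.2 ↔ 0 ≤ f.1 y + f.2) → y ∈ A := by
  obtain ⟨hfin, hopen, hcov, hadm⟩ := hα
  obtain ⟨K, hK, hK'⟩ : ∃ K : Set V, IsCompact K ∧ (K = univ ∨ Kᶜ ∈ α) := by
    by_cases h : ∃ A ∈ α, IsCompact Aᶜ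
    · obtain ⟨A, hA, hc⟩ := h
      exact ⟨Aᶜ, hc, Or.inr (by simpa using hA)⟩
    · push Not at h
      refine ⟨⋃ A ∈ α, closure A, hfin.isCompact_biUnion fun A hA => (hadm A hA).resolve_right (h A hA), Or.inl ?_⟩
      rw [Set.eq_univ_iff_forall] at hcov ⊢
      intro x
      obtain ⟨A, hA, hx⟩ := hcov x
      exact Set.mem_biUnion hA (subset_closure hx)
  have hpt : ∀ p : V, ∃ A ∈ α, p ∈ A := fun p => by
    have : p ∈ ⋃₀ α := hcov ▸ Set.mem_univ p
    simpa using this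
  choose A hAα hpA using hpt
  choose F hFfin hFsub hFnhds using fun p => exists_box p (A p) ((hopen _ (hAα p)).mem_nhds (hpA p))
  obtain ⟨t, -, ht⟩ := hK.elim_nhds_subcover _ (fun p _ => hFnhds p)
  refine ⟨⋃ p ∈ t, F p, t.finite_toSet.biUnion fun p _ => hFfin p, fun x => ?_⟩
  by_cases hx : ∃ p ∈ t, ∀ f ∈ F p, 0 ≤ f.1 x + f.2
  · obtain ⟨p, hp, hpx⟩ := hx
    refine ⟨A p, hAα p, fun y hy => hFsub p fun f hf => ?_⟩
    exact (hy f (Set.mem_biUnion hp hf)).1 (hpx f hf)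
  · have hno : ∀ y : V, (∀ f ∈ ⋃ p ∈ t, F p, 0 ≤ f.1 x + f.2 ↔ 0 ≤ f.1 y + f.2) → y ∉ K := by
      intro y hy hyK
      obtain ⟨p, hp, hpy⟩ := Set.mem_iUnion₂.1 (ht hyK)
      exact hx ⟨p, hp, fun f hf => (hy f (Set.mem_biUnion hp hf)).2 (hpy f hf)⟩
    rcases hK' with rfl | hK'
    · exact absurd (Set.mem_univ x) (hno x fun _ _ => Iff.rfl)
    · exact ⟨Kᶜ, hK', hno⟩

/-- Polynomial growth of the covering numbers. -/
theorem coverNum_le {V : Type*} [NormedAddCommGroup V] [NormedSpace ℝ V]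
    [FiniteDimensional ℝ V] (T : V →ₗ[ℝ] V) (α : Set (Set V)) (hα : IsAdmissibleCover α) :
    ∃ m D : ℕ, ∀ n : ℕ, coverNum (coverIter (T : V → V) α n) ≤ (D + 1) * (n * m + 1) ^ D := by
  classical
  obtain ⟨F, hF, hcell⟩ := exists_cells α hα
  choose A hAα hA using hcell
  haveI := hF.fintype
  refine ⟨Fintype.card F, Module.finrank ℝ ((V →ₗ[ℝ] ℝ) × ℝ), fun n => ?_⟩
  let f : Fin n × F → (V →ₗ[ℝ] ℝ) × ℝ := fun j => (j.2.1.1.comp (T ^ j.1.val), j.2.1.2)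
  have hf : ∀ (i : Fin n) (g : F) (x : V), (f (i, g)).1 x + (f (i, g)).2 =
      g.1.1 (T^[i.val] x) + g.1.2 := by
    intro i g x
    simp [f, Module.End.pow_apply]
  let P : V → Finset (Fin n × F) := fun x =>
    Finset.univ.filter fun j => 0 ≤ (f j).1 x + (f j).2
  let 𝒜 : Finset (Finset (Fin n × F)) := Finset.univ.filter fun s => ∃ x, P x = s
  have hcard := card_patterns_le f 𝒜 (by
    intro s hs
    obtain ⟨x, rfl⟩ := (Finset.mem_filter.1 hs).2
    exact ⟨x, fun j => by simp [P]⟩)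
  rw [Fintype.card_prod, Fintype.card_fin] at hcard
  let r : Finset (Fin n × F) → V := fun s => if h : ∃ x, P x = s then h.choose else 0
  have hr : ∀ x, P (r (P x)) = P x := by
    intro x
    have h : ∃ y, P y = P x := ⟨x, rfl⟩
    simp only [r, dif_pos h]
    exact h.choose_spec
  let B : Finset (Fin n × F) → Set V := fun s => ⋂ i : Fin n, T^[i.val] ⁻¹' A (T^[i.val] (r s))
  refine le_trans (Nat.sInf_le (m := (B '' (𝒜 : Set _)).ncard) ⟨B '' 𝒜, ?_, 𝒜.finite_toSet.image _, ?_, rfl⟩) ?_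
  · rintro _ ⟨s, -, rfl⟩
    exact ⟨fun i => A (T^[i.val] (r s)), fun i => hAα _, rfl⟩
  · rw [Set.eq_univ_iff_forall]
    intro x
    refine ⟨B (P x), ⟨P x, by simp [𝒜], rfl⟩, ?_⟩
    refine Set.mem_iInter.2 fun i => hA _ _ fun g hg => ?_
    have hP : ∀ y, (i, ⟨g, hg⟩) ∈ P y ↔ 0 ≤ g.1 (T^[i.val] y) + g.2 := by
      intro y
      simp only [P, Finset.mem_filter, Finset.mem_univ, true_and, hf]
    rw [← hP, ← hP, hr x]
  · refine (Set.ncard_image_le 𝒜.finite_toSet).trans ?_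
    rw [Set.ncard_coe_finset]
    exact hcard

theorem tendsto_log_poly_div (m D : ℕ) :
    Tendsto (fun n : ℕ => (Real.log (((D + 1) * (n * m + 1) ^ D : ℕ) : ℝ)) / n) atTop (𝓝 0) := by
  have hlog : Tendsto (fun n : ℕ => Real.log (n : ℝ) / n) atTop (𝓝 0) :=
    (Real.isLittleO_log_id_atTop.tendsto_div_nhds_zero).comp tendsto_natCast_atTop_atTop
  have hc : ∀ c : ℝ, Tendsto (fun n : ℕ => c / (n : ℝ)) atTop (𝓝 0) := fun c =>
    tendsto_const_div_atTop_nhds_zero_nat c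
  have hup : Tendsto (fun n : ℕ => (Real.log (D + 1) + D * Real.log (m + 1)) / (n : ℝ) +
      D * (Real.log (n : ℝ) / n)) atTop (𝓝 0) := by
    simpa using (hc _).add (hlog.const_mul (D : ℝ))
  refine tendsto_of_tendsto_of_tendsto_of_le_of_le' tendsto_const_nhds hup ?_ ?_
  · exact Eventually.of_forall fun n => div_nonneg (Real.log_natCast_nonneg _) (Nat.cast_nonneg _)
  · filter_upwards [eventually_ge_atTop 1] with n hn
    have hn' : (1 : ℝ) ≤ n := by exact_mod_cast hn
    have h1 : Real.log (((D + 1) * (n * m + 1) ^ D : ℕ) : ℝ) ≤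
        Real.log (D + 1) + D * Real.log (m + 1) + D * Real.log n := by
      push_cast
      rw [Real.log_mul (by positivity) (by positivity), Real.log_pow]
      have : Real.log ((n : ℝ) * m + 1) ≤ Real.log (m + 1) + Real.log n := by
        rw [← Real.log_mul (by positivity) (by positivity)]
        exact Real.log_le_log (by positivity) (by nlinarith)
      have := mul_le_mul_of_nonneg_left this (Nat.cast_nonneg (α := ℝ) D)
      linarith
    calc _ ≤ (Real.log (D + 1) + D * Real.log (m + 1) + D * Real.log n) / n := by gcongr
      _ = _ := by ring

theorem coverEntropyOf_nonneg {X : Type*} (T : X → X) (α : Set (Set X)) :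
    0 ≤ coverEntropyOf T α := by
  refine le_limsup_of_frequently_le (Eventually.of_forall fun n => ?_).frequently
  exact_mod_cast div_nonneg (Real.log_natCast_nonneg _) (Nat.cast_nonneg _)

/-- every linear isomorphism of a finite-dimensional real vector space
has vanishing topological entropy. -/
theorem topEntropy_linear_eq_zero {V : Type*} [NormedAddCommGroup V] [NormedSpace ℝ V]
    [FiniteDimensional ℝ V] (T : V →ₗ[ℝ] V) (hbij : Function.Bijective T) :
    topEntropy (T : V → V) = 0 := by
  apply le_antisymm
  · refine iSup₂_le fun α hα => ?_
    obtain ⟨m, D, h⟩ := coverNum_le T α hα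
    have ht : Tendsto (fun n : ℕ => ((Real.log (((D + 1) * (n * m + 1) ^ D : ℕ) : ℝ) / n : ℝ) :
        EReal)) atTop (𝓝 ((0 : ℝ) : EReal)) :=
      (continuous_coe_real_ereal.tendsto 0).comp (tendsto_log_poly_div m D)
    rw [← EReal.coe_zero, ← ht.limsup_eq]
    refine limsup_le_limsup (Eventually.of_forall fun n => ?_)
    refine EReal.coe_le_coe_iff.2 (div_le_div_of_nonneg_right ?_ (Nat.cast_nonneg _))
    rcases Nat.eq_zero_or_pos (coverNum (coverIter (T : V → V) α n)) with h0 | h0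
    · rw [h0, Nat.cast_zero, Real.log_zero]
      exact Real.log_natCast_nonneg _
    · exact Real.log_le_log (by exact_mod_cast h0) (by exact_mod_cast h n)
  · refine le_trans (coverEntropyOf_nonneg (T : V → V) {univ}) ?_
    refine le_iSup₂_of_le {univ} ⟨Set.finite_singleton _, by simp, by simp, by simp⟩ le_rfl
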